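/- For every odd integer g with g ≥ 9 and g ≠ 11, there is no well-indumatched graph of girth g. -/

import Mathlib

open SimpleGraph

/-- `M` is an induced matching of `G`: a set of edges of `G` such that no two distinct
edges of `M` share an endpoint or have endpoints joined by an edge of `G`. -/
def IsInducedMatching {V : Type*} (G : SimpleGraph V) (M : Set (Sym2 V)) : Prop :=
  M ⊆ G.edgeSet ∧
    ∀ e ∈ M, ∀ f ∈ M, e ≠ f → ∀ u ∈ e, ∀ v ∈ f, u ≠ v ∧ ¬ G.Adj u v

/-- `M` is a maximal induced matching of `G`. -/
def IsMaximalInducedMatching {V : Type*} (G : SimpleGraph V) (M : Set (Sym2 V)) : Prop :=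
  IsInducedMatching G M ∧
    ∀ N : Set (Sym2 V), IsInducedMatching G N → M ⊆ N → N = M

/-- `G` is well-indumatched: all of its maximal induced matchings have the same size. -/
def WellIndumatched {V : Type*} (G : SimpleGraph V) : Prop :=
  ∀ M N : Set (Sym2 V), IsMaximalInducedMatching G M → IsMaximalInducedMatching G N →
    M.ncard = N.ncard

/-!
Let `I` be an induced matching, `e` an edge of `G - N[I]`, and `f₁`, `f₂` two edges such that
`I ∪ {f₁, f₂}` is an induced matching. If the edges that can still be added to `I ∪ {e}` all avoid
the neighbourhoods of `f₁` and `f₂`, then in any completion of `I ∪ {e}` to a maximal induced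
matching `e` may be exchanged for `f₁` and `f₂`, so `G` is not well-indumatched.

Well-indumatchedness passes from `G` to `G - N[K]` for induced matchings `K`, so a shortest cycle
`c` may be assumed to be within distance one of every edge. As the girth is at least `9`, only
pairwise disjoint trees of depth at most two then hang on the cycle. Exchanges show that a tree of
depth two at `c i` forces one at `c (i + 2)` but excludes one at `c (i + 1)`, which is impossible
on an odd cycle. Without trees of depth two, `c i` and `c (i + 2)` do not both have a neighbour off
the cycle. Yet if `c i` has none, then `cycleEdge c (i + 2)` can be exchanged for `cycleEdge c i`
and `cycleEdge c (i + 3)`, with `I` consisting of the edges `cycleEdge c (i - 3)` and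
`cycleEdge c (i + 6)`; these two coincide or can belong to one induced matching unless `g` is `10`
or `11`.
-/

section InducedMatchings

variable {V : Type*} {G : SimpleGraph V} {K M : Set (Sym2 V)} {e f : Sym2 V} {u v a b : V}

/-- The closed neighbourhood `N[v]` of the vertex `v`. -/
def closedNbhd (G : SimpleGraph V) (v : V) : Set V :=
  insert v (G.neighborSet v)

/-- The union of the closed neighbourhoods of all end vertices of edges in `M`: no edge meeting it
can be added to the induced matching `M`. -/
def dominatedSet (G : SimpleGraph V) (M : Set (Sym2 V)) : Set V :=
  {u | ∃ e ∈ M, ∃ v ∈ e, u ∈ closedNbhd G v}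

/-- The graph `G - N[M]` left after deleting the vertices dominated by `M`, encoded as a spanning
subgraph of `G` in which the deleted vertices are isolated. Its edges are the edges that can be
added to the induced matching `M`. -/
def residualGraph (G : SimpleGraph V) (M : Set (Sym2 V)) : SimpleGraph V :=
  ((⊤ : G.Subgraph).deleteVerts (dominatedSet G M)).spanningCoe

lemma mem_closedNbhd : u ∈ closedNbhd G v ↔ u = v ∨ G.Adj v u :=
  Iff.rfl

lemma self_mem_closedNbhd (v : V) : v ∈ closedNbhd G v :=
  Or.inl rfl

lemma mem_closedNbhd_comm : u ∈ closedNbhd G v ↔ v ∈ closedNbhd G u := by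
  rw [mem_closedNbhd, mem_closedNbhd, eq_comm, G.adj_comm]

lemma notMem_closedNbhd : u ∉ closedNbhd G v ↔ u ≠ v ∧ ¬ G.Adj u v := by
  rw [mem_closedNbhd, not_or, G.adj_comm]

lemma mem_dominatedSet (he : e ∈ M) (hv : v ∈ e) (hu : u ∈ closedNbhd G v) :
    u ∈ dominatedSet G M :=
  ⟨e, he, v, hv, hu⟩

lemma mem_dominatedSet_singleton :
    u ∈ dominatedSet G {s(a, b)} ↔ u ∈ closedNbhd G a ∨ u ∈ closedNbhd G b := by
  simp [dominatedSet]

lemma dominatedSet_union :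
    dominatedSet G (M ∪ K) = dominatedSet G M ∪ dominatedSet G K := by
  ext u
  simp only [dominatedSet, Set.mem_union, Set.mem_ofPred_eq, or_and_right, exists_or]

lemma residualGraph_adj :
    (residualGraph G M).Adj u v ↔ G.Adj u v ∧ u ∉ dominatedSet G M ∧ v ∉ dominatedSet G M := by
  simp only [residualGraph, Subgraph.spanningCoe_adj, Subgraph.deleteVerts_adj,
    Subgraph.verts_top, Set.mem_univ, Subgraph.top_adj, true_and]
  tauto

lemma residualGraph_le : residualGraph G M ≤ G :=
  fun _ _ h => (residualGraph_adj.1 h).1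

lemma residualGraph_empty : residualGraph G ∅ = G := by
  ext u v
  simp [residualGraph_adj, dominatedSet]

lemma mem_edgeSet_residualGraph :
    e ∈ (residualGraph G M).edgeSet ↔ e ∈ G.edgeSet ∧ ∀ v ∈ e, v ∉ dominatedSet G M := by
  induction e with
  | _ u v => rw [mem_edgeSet, mem_edgeSet, Sym2.ball, residualGraph_adj]

lemma mem_edgeSet_residualGraph_singleton :
    s(u, v) ∈ (residualGraph G {s(a, b)}).edgeSet ↔ G.Adj u v ∧
      (u ∉ closedNbhd G a ∧ u ∉ closedNbhd G b) ∧ v ∉ closedNbhd G a ∧ v ∉ closedNbhd G b := by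
  simp only [mem_edgeSet, residualGraph_adj, mem_dominatedSet_singleton, not_or]

lemma mem_edgeSet_residualGraph_insert : e ∈ (residualGraph G (insert f M)).edgeSet ↔
    e ∈ (residualGraph G {f}).edgeSet ∧ e ∈ (residualGraph G M).edgeSet := by
  simp only [mem_edgeSet_residualGraph, Set.insert_eq f M, dominatedSet_union, Set.mem_union]
  grind

lemma notMem_of_mem_edgeSet_residualGraph (he : e ∈ (residualGraph G M).edgeSet) : e ∉ M := by
  intro heM
  induction e with
  | _ u v =>
    exact (mem_edgeSet_residualGraph.1 he).2 u (Sym2.mem_mk_left u v)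
      (mem_dominatedSet heM (Sym2.mem_mk_left u v) (self_mem_closedNbhd u))

lemma disjoint_of_subset_edgeSet_residualGraph (h : M ⊆ (residualGraph G K).edgeSet) :
    Disjoint M K :=
  Set.disjoint_left.2 fun _ he => notMem_of_mem_edgeSet_residualGraph (h he)

lemma isInducedMatching_empty : IsInducedMatching G ∅ :=
  ⟨Set.empty_subset _, by simp⟩

lemma isInducedMatching_singleton (he : e ∈ G.edgeSet) : IsInducedMatching G {e} :=
  ⟨Set.singleton_subset_iff.2 he, fun _ he _ hf hne => (hne (he.trans hf.symm)).elim⟩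

lemma isInducedMatching_residualGraph_iff :
    IsInducedMatching (residualGraph G K) M ↔
      IsInducedMatching G M ∧ M ⊆ (residualGraph G K).edgeSet := by
  refine ⟨fun h => ⟨⟨h.1.trans (edgeSet_mono residualGraph_le), ?_⟩, h.1⟩, fun h => ⟨h.2, ?_⟩⟩
  · intro e he f hf hne u hu v hv
    obtain ⟨huv, hadj⟩ := h.2 e he f hf hne u hu v hv
    exact ⟨huv, fun h' => hadj (residualGraph_adj.2
      ⟨h', (mem_edgeSet_residualGraph.1 (h.1 he)).2 u hu,
        (mem_edgeSet_residualGraph.1 (h.1 hf)).2 v hv⟩)⟩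
  · exact fun e he f hf hne u hu v hv =>
      (h.1.2 e he f hf hne u hu v hv).imp_right fun hadj h' => hadj (residualGraph_le h')

lemma IsInducedMatching.union (hM : IsInducedMatching G M) (hK : IsInducedMatching G K)
    (h : M ⊆ (residualGraph G K).edgeSet) : IsInducedMatching G (M ∪ K) := by
  have hMK : ∀ e ∈ M, ∀ f ∈ K, ∀ u ∈ e, ∀ v ∈ f, u ≠ v ∧ ¬ G.Adj u v :=
    fun e he f hf u hu v hv => notMem_closedNbhd.1 fun huv =>
      (mem_edgeSet_residualGraph.1 (h he)).2 u hu (mem_dominatedSet hf hv huv)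
  refine ⟨Set.union_subset hM.1 hK.1, ?_⟩
  rintro e (he | he) f (hf | hf) hne u hu v hv
  · exact hM.2 e he f hf hne u hu v hv
  · exact hMK e he f hf u hu v hv
  · exact (hMK f hf e he v hv u hu).imp Ne.symm (mt G.adj_symm)
  · exact hK.2 e he f hf hne u hu v hv

lemma IsInducedMatching.insert (hM : IsInducedMatching G M)
    (he : e ∈ (residualGraph G M).edgeSet) : IsInducedMatching G (insert e M) :=
  (isInducedMatching_singleton (edgeSet_mono residualGraph_le he)).union hM
    (Set.singleton_subset_iff.2 he)

lemma IsInducedMatching.exists_isMaximalInducedMatching [Finite V] (hM : IsInducedMatching G M) :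
    ∃ N, IsMaximalInducedMatching G N ∧ M ⊆ N := by
  obtain ⟨N, hMN, hN⟩ := (Set.toFinite {N | IsInducedMatching G N}).exists_le_maximal hM
  exact ⟨N, ⟨hN.prop, fun _ hL hNL => (hN.eq_of_subset hL hNL).symm⟩, hMN⟩

lemma isMaximalInducedMatching_iff :
    IsMaximalInducedMatching G M ↔ IsInducedMatching G M ∧ residualGraph G M = ⊥ := by
  refine and_congr_right fun hM => ⟨fun hmax => ?_, fun hbot N hN hMN => ?_⟩
  · refine edgeSet_eq_empty.1 (Set.eq_empty_of_forall_notMem fun e he => ?_)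
    have heM : e ∈ M := hmax _ (hM.insert he) (Set.subset_insert e M) ▸ Set.mem_insert e M
    exact notMem_of_mem_edgeSet_residualGraph he heM
  · refine Set.Subset.antisymm (fun e heN => ?_) hMN
    by_contra heM
    have he : e ∈ (residualGraph G M).edgeSet := by
      refine mem_edgeSet_residualGraph.2 ⟨hN.1 heN, ?_⟩
      rintro u hu ⟨f, hf, v, hv, huv⟩
      exact notMem_closedNbhd.2
        (hN.2 e heN f (hMN hf) (ne_of_mem_of_not_mem hf heM).symm u hu v hv) huv
    simp [hbot] at he

lemma residualGraph_residualGraph (hM : M ⊆ (residualGraph G K).edgeSet) :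
    residualGraph (residualGraph G K) M = residualGraph G (M ∪ K) := by
  have hdom : ∀ w ∉ dominatedSet G K,
      (w ∈ dominatedSet (residualGraph G K) M ↔ w ∈ dominatedSet G M) := by
    refine fun w hw => exists_congr fun e => and_congr_right fun he => exists_congr fun v =>
      and_congr_right fun hv => ?_
    have hvK := (mem_edgeSet_residualGraph.1 (hM he)).2 v hv
    rw [mem_closedNbhd, mem_closedNbhd, residualGraph_adj, and_iff_left ⟨hvK, hw⟩]
  ext u v
  simp only [residualGraph_adj, dominatedSet_union, Set.mem_union, not_or]
  grind

lemma IsMaximalInducedMatching.union (hM : IsMaximalInducedMatching (residualGraph G K) M)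
    (hK : IsInducedMatching G K) : IsMaximalInducedMatching G (M ∪ K) := by
  obtain ⟨hMI, hbot⟩ := isMaximalInducedMatching_iff.1 hM
  obtain ⟨hMG, hsub⟩ := isInducedMatching_residualGraph_iff.1 hMI
  exact isMaximalInducedMatching_iff.2
    ⟨hMG.union hK hsub, by rw [← residualGraph_residualGraph hsub, hbot]⟩

theorem WellIndumatched.residualGraph [Finite V] (hG : WellIndumatched G)
    (hK : IsInducedMatching G K) : WellIndumatched (residualGraph G K) := by
  intro M N hM hN
  have h := hG _ _ (hM.union hK) (hN.union hK)
  rwa [Set.ncard_union_eq (disjoint_of_subset_edgeSet_residualGraph hM.1.1),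
    Set.ncard_union_eq (disjoint_of_subset_edgeSet_residualGraph hN.1.1),
    Nat.add_right_cancel_iff] at h

/-- Every way of completing `A` to a maximal induced matching also completes `B`, at least
partially, to a larger one. -/
theorem not_wellIndumatched_of_residualGraph_le [Finite V] {A B : Set (Sym2 V)}
    (hA : IsInducedMatching G A) (hB : IsInducedMatching G B) (hcard : A.ncard < B.ncard)
    (hle : residualGraph G A ≤ residualGraph G B) : ¬ WellIndumatched G := by
  intro hG
  obtain ⟨M, hM, -⟩ :=
    (isInducedMatching_empty (G := residualGraph G A)).exists_isMaximalInducedMatching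
  obtain ⟨hMG, hMA⟩ := isInducedMatching_residualGraph_iff.1 hM.1
  have hMB : M ⊆ (residualGraph G B).edgeSet := hMA.trans (edgeSet_mono hle)
  obtain ⟨N, hN, hMBN⟩ := (hMG.union hB hMB).exists_isMaximalInducedMatching
  have hlt : (M ∪ A).ncard < N.ncard := calc
    (M ∪ A).ncard = M.ncard + A.ncard :=
      Set.ncard_union_eq (disjoint_of_subset_edgeSet_residualGraph hMA)
    _ < M.ncard + B.ncard := by gcongr
    _ = (M ∪ B).ncard := (Set.ncard_union_eq (disjoint_of_subset_edgeSet_residualGraph hMB)).symm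
    _ ≤ N.ncard := Set.ncard_le_ncard hMBN
  exact hlt.ne (hG _ _ (hM.union hA) hN)

/-- `M` settles the vertex `v` if no edge of `G - N[M]` meets `N[v]`. Thus an edge with both end
vertices settled by `M` blocks no edge that `M` does not already block. -/
def Settles (G : SimpleGraph V) (M : Set (Sym2 V)) (v : V) : Prop :=
  ∀ u ∈ closedNbhd G v, u ∉ (residualGraph G M).support

lemma notMem_support_of_mem_dominatedSet (hu : u ∈ dominatedSet G M) :
    u ∉ (residualGraph G M).support :=
  fun ⟨_, h⟩ => (residualGraph_adj.1 h).2.1 hu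

lemma notMem_support_of_forall_adj (h : ∀ w, G.Adj u w → w ∈ dominatedSet G M) :
    u ∉ (residualGraph G M).support :=
  fun ⟨w, hw⟩ => (residualGraph_adj.1 hw).2.2 (h w (residualGraph_le hw))

lemma settles_of_mem (he : e ∈ M) (hv : v ∈ e) : Settles G M v :=
  fun _ hu => notMem_support_of_mem_dominatedSet (mem_dominatedSet he hv hu)

lemma residualGraph_le_of_settles {A B : Set (Sym2 V)} (h : ∀ e ∈ B, ∀ v ∈ e, Settles G A v) :
    residualGraph G A ≤ residualGraph G B := by
  have hdom : ∀ u ∈ (residualGraph G A).support, u ∉ dominatedSet G B :=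
    fun u hu ⟨e, he, v, hv, huv⟩ => h e he v hv u huv hu
  exact fun u w huw => residualGraph_adj.2
    ⟨residualGraph_le huw, hdom u ⟨w, huw⟩, hdom w ⟨u, huw.symm⟩⟩

theorem not_wellIndumatched_of_exchange [Finite V] {I : Set (Sym2 V)} {e f₁ f₂ : Sym2 V}
    (hI : IsInducedMatching G I) (he : e ∈ (residualGraph G I).edgeSet)
    (hf₂ : f₂ ∈ (residualGraph G I).edgeSet) (hf₁ : f₁ ∈ (residualGraph G (insert f₂ I)).edgeSet)
    (hs₁ : ∀ v ∈ f₁, Settles G (insert e I) v) (hs₂ : ∀ v ∈ f₂, Settles G (insert e I) v) :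
    ¬ WellIndumatched G := by
  refine not_wellIndumatched_of_residualGraph_le (A := insert e I) (B := insert f₁ (insert f₂ I))
    (hI.insert he) ((hI.insert hf₂).insert hf₁) ?_ (residualGraph_le_of_settles ?_)
  · rw [Set.ncard_insert_of_notMem (notMem_of_mem_edgeSet_residualGraph hf₁),
      Set.ncard_insert_of_notMem (notMem_of_mem_edgeSet_residualGraph hf₂)]
    have := Set.ncard_insert_le e I
    omega
  · rintro f (rfl | rfl | hf)
    exacts [hs₁, hs₂, fun v hv => settles_of_mem (Set.mem_insert_of_mem e hf) hv]

end InducedMatchings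

section GirthCycles

variable {V : Type*} {G : SimpleGraph V} {g : ℕ} {c : ℤ → V} {u v : V} {i j : ℤ}

/-- The edge of the closed walk `c` that joins `c i` to `c (i + 1)`. -/
def cycleEdge (c : ℤ → V) (i : ℤ) : Sym2 V :=
  s(c i, c (i + 1))

/-- `c` runs around a shortest cycle of `G`, whose length is `g`. The vertices are indexed by the
integers modulo `g`, written as a function on `ℤ` so that index arithmetic is integer
arithmetic. -/
structure IsGirthCycle (G : SimpleGraph V) (g : ℕ) (c : ℤ → V) : Prop where
  three_le : 3 ≤ g
  adj_succ : ∀ i, G.Adj (c i) (c (i + 1))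
  eq_iff : ∀ {i j}, c i = c j ↔ i ≡ j [ZMOD g]
  le_egirth : g ≤ G.egirth

lemma exists_isGirthCycle (hG : ¬ G.IsAcyclic) : ∃ c, IsGirthCycle G G.girth c := by
  obtain ⟨v, w, hw, hlen⟩ := exists_girth_eq_length.2 hG
  obtain ⟨f⟩ := (cycleGraph_isContained_iff (three_le_girth hG)).2 ⟨v, w, hw, hlen.symm⟩
  obtain ⟨n, hn⟩ := Nat.exists_eq_add_of_le' (three_le_girth hG)
  have hle : (G.girth : ℕ∞) ≤ G.egirth := G.egirth.natCast_toNat_le_self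
  rw [hn] at f hle ⊢
  open Fin.CommRing in
  exact ⟨fun i => f (i : Fin (n + 3)), by omega,
    fun i => f.toHom.map_adj (cycleGraph_adj.2 (by simp)),
    f.injective.eq_iff.trans (CharP.intCast_eq_intCast _ _), hle⟩

lemma egirth_le_length_add_one (h : G.Adj u v) (w : G.Walk v u) (hw : s(u, v) ∉ w.edges) :
    G.egirth ≤ ↑(w.length + 1) := by
  classical
  have hcycle : (Walk.cons h w.bypass).IsCycle :=
    (Walk.cons_isCycle_iff _ _).2 ⟨w.bypass_isPath, fun h' => hw (w.edges_bypass_subset_edges h')⟩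
  refine (egirth_le_length hcycle).trans ?_
  rw [Walk.length_cons]
  exact_mod_cast Nat.add_le_add_right w.length_bypass_le_length 1

lemma exists_add_modEq_or_add_modEq (hg : 0 < g) (i j : ℤ) :
    ∃ n : ℕ, 2 * n ≤ g ∧ (i + n ≡ j [ZMOD g] ∨ j + n ≡ i [ZMOD g]) := by
  have hle := Int.le_bmod (x := j - i) hg
  have hlt := Int.bmod_lt (x := j - i) hg
  obtain ⟨k, hk⟩ := Int.dvd_self_sub_bmod (x := j - i) (m := g)
  refine ⟨((j - i).bmod g).natAbs, by omega, ?_⟩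
  rcases Int.natAbs_eq ((j - i).bmod g) with h | h
  · exact Or.inl (Int.modEq_iff_dvd.2 ⟨k, by linarith⟩)
  · exact Or.inr (Int.modEq_iff_dvd.2 ⟨-k, by linarith⟩)

namespace IsGirthCycle

lemma ne (H : IsGirthCycle G g c) (hij : i < j) (hji : j < i + g) : c i ≠ c j := fun h => by
  obtain ⟨k, hk⟩ := (H.eq_iff.1 h).dvd
  have := Int.eq_zero_of_abs_lt_dvd ⟨k, hk⟩ (abs_lt.2 ⟨by omega, by omega⟩)
  omega

lemma cycleEdge_mem_edgeSet (H : IsGirthCycle G g c) (i : ℤ) : cycleEdge c i ∈ G.edgeSet :=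
  H.adj_succ i

lemma exists_walk_length_eq (H : IsGirthCycle G g c) (i : ℤ) (n : ℕ) :
    ∃ w : G.Walk (c i) (c (i + n)), w.length = n ∧ ∀ e ∈ w.edges, e ∈ Set.range (cycleEdge c) := by
  induction n with
  | zero =>
    rw [Nat.cast_zero, add_zero]
    exact ⟨Walk.nil, rfl, by simp⟩
  | succ n ih =>
    obtain ⟨w, hlen, hedges⟩ := ih
    rw [Nat.cast_succ, ← add_assoc]
    refine ⟨w.concat (H.adj_succ _), by rw [Walk.length_concat, hlen], fun e he => ?_⟩
    rw [Walk.edges_concat, List.concat_eq_append, List.mem_append, List.mem_singleton] at he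
    exact he.elim (hedges e) fun h => ⟨i + n, h.symm⟩

lemma exists_walk_two_mul_length_le (H : IsGirthCycle G g c) (i j : ℤ) :
    ∃ w : G.Walk (c i) (c j), 2 * w.length ≤ g ∧ ∀ e ∈ w.edges, e ∈ Set.range (cycleEdge c) := by
  have hg : 0 < g := by have := H.three_le; omega
  obtain ⟨n, hn, h | h⟩ := exists_add_modEq_or_add_modEq hg i j
  · obtain ⟨w, hw, hedges⟩ := H.exists_walk_length_eq i n
    exact ⟨w.copy rfl (H.eq_iff.2 h), by simpa [hw] using hn, by simpa using hedges⟩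
  · obtain ⟨w, hw, hedges⟩ := H.exists_walk_length_eq j n
    exact ⟨(w.copy rfl (H.eq_iff.2 h)).reverse, by simpa [hw] using hn, by simpa using hedges⟩

/-- Closing the walk up along the shorter arc of the girth cycle gives a cycle of length at most
`w.length + 1 + g / 2`. -/
lemma le_two_mul_length_add_one (H : IsGirthCycle G g c) {x : V} (hadj : G.Adj (c i) x)
    (hx : s(c i, x) ∉ Set.range (cycleEdge c)) (w : G.Walk x (c j)) (hw : s(c i, x) ∉ w.edges) :
    g ≤ 2 * (w.length + 1) := by
  obtain ⟨arc, hlen, hedges⟩ := H.exists_walk_two_mul_length_le j i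
  have hnot : s(c i, x) ∉ (w.append arc).edges := by
    rw [Walk.edges_append, List.mem_append]
    exact not_or.2 ⟨hw, fun h => hx (hedges _ h)⟩
  have h := H.le_egirth.trans (egirth_le_length_add_one hadj _ hnot)
  rw [Walk.length_append, Nat.cast_le] at h
  omega

lemma eq_succ_or_eq_pred (H : IsGirthCycle G g c) (h : G.Adj (c i) (c j)) :
    c j = c (i + 1) ∨ c j = c (i - 1) := by
  by_cases hedge : s(c i, c j) ∈ Set.range (cycleEdge c)
  · obtain ⟨k, hk⟩ := hedge
    rcases Sym2.eq_iff.1 hk with ⟨hi, hj⟩ | ⟨hj, hi⟩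
    · exact Or.inl (hj.symm.trans (H.eq_iff.2 ((H.eq_iff.1 hi).add_right 1)))
    · refine Or.inr (hj.symm.trans (H.eq_iff.2 ?_))
      simpa using (H.eq_iff.1 hi).sub_right 1
  · have := H.le_two_mul_length_add_one h hedge Walk.nil (by simp)
    have := H.three_le
    simp only [Walk.length_nil] at *
    omega

lemma mem_closedNbhd (H : IsGirthCycle G g c) (hij : i ≤ j + 1) (hji : j ≤ i + 1) :
    c i ∈ closedNbhd G (c j) := by
  obtain rfl | rfl | rfl : i = j ∨ i = j + 1 ∨ j = i + 1 := by omega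
  · exact self_mem_closedNbhd _
  · exact Or.inr (H.adj_succ j)
  · exact Or.inr (H.adj_succ i).symm

lemma notMem_closedNbhd (H : IsGirthCycle G g c)
    (hij : i + 2 ≤ j ∧ j + 2 ≤ i + g ∨ j + 2 ≤ i ∧ i + 2 ≤ j + g) : c i ∉ closedNbhd G (c j) := by
  wlog hlt : i + 2 ≤ j ∧ j + 2 ≤ i + g generalizing i j
  · rw [mem_closedNbhd_comm]
    exact this (by omega) (by omega)
  rintro (h | h)
  · exact H.ne (by omega) (by omega) h
  · rcases H.eq_succ_or_eq_pred h with h | h <;> exact H.ne (by omega) (by omega) h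

lemma cycleEdge_mem_edgeSet_residualGraph (H : IsGirthCycle G g c)
    (hij : i + 3 ≤ j ∧ j + 3 ≤ i + g ∨ j + 3 ≤ i ∧ i + 3 ≤ j + g) :
    cycleEdge c i ∈ (residualGraph G {cycleEdge c j}).edgeSet := by
  refine mem_edgeSet_residualGraph_singleton.2 ⟨H.adj_succ i, ⟨?_, ?_⟩, ?_, ?_⟩ <;>
    exact H.notMem_closedNbhd (by omega)

/-- For `g = 9` the two edges of the matching coincide. -/
lemma isInducedMatching_pair (H : IsGirthCycle G g c) (hg : g = 9 ∨ 12 ≤ g) (i : ℤ) :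
    IsInducedMatching G {cycleEdge c i, cycleEdge c (i + 9)} := by
  have hsingle := isInducedMatching_singleton (H.cycleEdge_mem_edgeSet (i + 9))
  rcases hg with rfl | hg
  · have heq : cycleEdge c (i + 9) = cycleEdge c i := by
      have h : i + 9 ≡ i [ZMOD (9 : ℕ)] := Int.add_modEq_right ..
      rw [cycleEdge, cycleEdge, H.eq_iff.2 h, H.eq_iff.2 (h.add_right 1)]
    rwa [heq, Set.pair_eq_singleton, ← heq]
  · exact hsingle.insert (H.cycleEdge_mem_edgeSet_residualGraph (by omega))

end IsGirthCycle

end GirthCycles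

section Branches

variable {V : Type*} {G : SimpleGraph V} {A : Set (Sym2 V)} {g : ℕ} {c : ℤ → V} {i j : ℤ}
  {u x x' y y' z : V}

/-- `x` is a neighbour of the cycle vertex `c i` that is not itself on the cycle. -/
structure IsBranch (G : SimpleGraph V) (c : ℤ → V) (i : ℤ) (x : V) : Prop where
  notMem_range : x ∉ Set.range c
  adj : G.Adj (c i) x

/-- The branch `x` at `c i` can be prolonged by one more edge, to the vertex `y`. -/
structure IsLongBranch (G : SimpleGraph V) (c : ℤ → V) (i : ℤ) (x y : V) : Prop
    extends IsBranch G c i x where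
  adj_tip : G.Adj x y
  tip_ne : y ≠ c i

/-- A girth cycle such that every edge of the graph has an end vertex on or adjacent to it. -/
structure IsDominatingGirthCycle (G : SimpleGraph V) (g : ℕ) (c : ℤ → V) : Prop
    extends IsGirthCycle G g c where
  dominates : ∀ {u v}, G.Adj u v → (∃ i, u ∈ closedNbhd G (c i)) ∨ ∃ i, v ∈ closedNbhd G (c i)

theorem IsGirthCycle.exists_isDominatingGirthCycle_residualGraph [Finite V]
    (H : IsGirthCycle G g c) :
    ∃ K, IsInducedMatching G K ∧ IsDominatingGirthCycle (residualGraph G K) g c := by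
  obtain ⟨K, hK⟩ := (Set.toFinite
    {K | IsInducedMatching G K ∧ ∀ i, c i ∉ dominatedSet G K}).exists_maximal
      ⟨∅, isInducedMatching_empty, by simp [dominatedSet]⟩
  obtain ⟨hKI, hKc⟩ := hK.prop
  refine ⟨K, hKI, ⟨H.three_le, fun i => residualGraph_adj.2 ⟨H.adj_succ i, hKc _, hKc _⟩,
    H.eq_iff, H.le_egirth.trans (egirth_anti residualGraph_le)⟩, fun {u v} huv => ?_⟩
  by_contra! hfar
  have hfar_G : ∀ a ∉ dominatedSet G K, (∀ i, a ∉ closedNbhd (residualGraph G K) (c i)) →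
      ∀ i, c i ∉ closedNbhd G a := by
    intro a ha h i hi
    exact h i ((mem_closedNbhd_comm.1 hi).imp_right fun hadj =>
      residualGraph_adj.2 ⟨hadj, hKc i, ha⟩)
  obtain ⟨-, hu, hv⟩ := residualGraph_adj.1 huv
  have hmem : insert s(u, v) K ∈
      {K | IsInducedMatching G K ∧ ∀ i, c i ∉ dominatedSet G K} := by
    refine ⟨hKI.insert huv, fun i hi => ?_⟩
    rw [Set.insert_eq, dominatedSet_union, Set.mem_union, mem_dominatedSet_singleton] at hi
    rcases hi with (hi | hi) | hi
    exacts [hfar_G u hu hfar.1 i hi, hfar_G v hv hfar.2 i hi, hKc i hi]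
  have huvK : s(u, v) ∈ K := hK.le_of_ge hmem (Set.subset_insert _ K) (Set.mem_insert _ K)
  exact notMem_of_mem_edgeSet_residualGraph huv huvK

lemma IsGirthCycle.le_two_mul_length_add_two (H : IsGirthCycle G g c) (hx : IsBranch G c i x)
    (w : G.Walk x u) (hw : s(c i, x) ∉ w.edges) (hu : u ∈ closedNbhd G (c j))
    (hne : u = x → c i ≠ c j) : g ≤ 2 * (w.length + 2) := by
  have hedge : s(c i, x) ∉ Set.range (cycleEdge c) := by
    rintro ⟨k, hk⟩
    rcases Sym2.eq_iff.1 hk with ⟨-, h⟩ | ⟨h, -⟩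
    exacts [hx.notMem_range ⟨_, h⟩, hx.notMem_range ⟨_, h⟩]
  rcases hu with rfl | hu
  · have := H.le_two_mul_length_add_one hx.adj hedge w hw
    omega
  · have hlast : s(c i, x) ∉ (w.concat hu.symm).edges := by
      simp only [Walk.edges_concat, List.concat_eq_append, List.mem_append, List.mem_singleton,
        Sym2.eq_iff]
      rintro (h | ⟨-, h⟩ | ⟨h, h'⟩)
      exacts [hw h, hx.notMem_range ⟨j, h.symm⟩, hne h'.symm h]
    simpa [Walk.length_concat] using H.le_two_mul_length_add_one hx.adj hedge _ hlast

namespace IsBranch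

lemma ne_cycle (hx : IsBranch G c i x) (j : ℤ) : x ≠ c j :=
  fun h => hx.notMem_range ⟨j, h.symm⟩

lemma notMem_closedNbhd (hx : IsBranch G c i x) (H : IsGirthCycle G g c) (hg : 5 ≤ g)
    (hij : i < j ∧ j < i + g ∨ j < i ∧ i < j + g) : x ∉ closedNbhd G (c j) := by
  intro h
  have hne : c i ≠ c j :=
    hij.elim (fun h => H.ne h.1 h.2) fun h => (H.ne h.1 h.2).symm
  have := H.le_two_mul_length_add_two hx Walk.nil (by simp) h fun _ => hne
  simp only [Walk.length_nil] at this
  omega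

lemma notMem_closedNbhd_branch (hx : IsBranch G c i x) (hx' : IsBranch G c j x')
    (H : IsGirthCycle G g c) (hg : 7 ≤ g) (hij : i < j ∧ j < i + g) : x ∉ closedNbhd G x' := by
  rintro (rfl | h)
  · exact hx.notMem_closedNbhd H (by omega) (Or.inl hij) (Or.inr hx'.adj)
  · have := H.le_two_mul_length_add_two hx h.symm.toWalk
      (by simp [(hx'.ne_cycle i).symm, hx.adj.ne]) (Or.inr hx'.adj) fun h' => (h.ne h').elim
    simp only [Adj.toWalk, Walk.length_cons, Walk.length_nil] at this
    omega

end IsBranch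

namespace IsLongBranch

lemma tip_notMem_closedNbhd (hxy : IsLongBranch G c i x y) (H : IsGirthCycle G g c) (hg : 7 ≤ g)
    (j : ℤ) : y ∉ closedNbhd G (c j) := by
  intro h
  have := H.le_two_mul_length_add_two hxy.toIsBranch hxy.adj_tip.toWalk
    (by simp [hxy.adj.ne, hxy.tip_ne.symm]) h fun h' => (hxy.adj_tip.ne h'.symm).elim
  simp only [Adj.toWalk, Walk.length_cons, Walk.length_nil] at this
  omega

lemma eq_of_adj_tip (hxy : IsLongBranch G c i x y) (H : IsDominatingGirthCycle G g c)
    (hg : 9 ≤ g) (h : G.Adj y z) : z = x := by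
  by_contra hzx
  rcases H.dominates h with ⟨j, hj⟩ | ⟨j, hj⟩
  · exact hxy.tip_notMem_closedNbhd H.toIsGirthCycle (by omega) j hj
  · have := H.le_two_mul_length_add_two hxy.toIsBranch (.cons hxy.adj_tip h.toWalk)
      (by simp [hxy.adj.ne, hxy.tip_ne.symm, hxy.adj_tip.ne]) hj fun h' => (hzx h').elim
    simp only [Adj.toWalk, Walk.length_cons, Walk.length_nil] at this
    omega

lemma closedNbhd_tip (hxy : IsLongBranch G c i x y) (H : IsDominatingGirthCycle G g c)
    (hg : 9 ≤ g) : closedNbhd G y = {y, x} := by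
  ext z
  exact or_congr_right ⟨hxy.eq_of_adj_tip H hg, fun h => h ▸ hxy.adj_tip.symm⟩

lemma settles_branch (hxy : IsLongBranch G c i x y) (H : IsDominatingGirthCycle G g c)
    (hg : 9 ≤ g) (hi : c i ∈ dominatedSet G A) (hx : x ∈ dominatedSet G A) : Settles G A x := by
  rintro u (rfl | hu)
  · exact notMem_support_of_mem_dominatedSet hx
  · by_cases hui : u = c i
    · exact notMem_support_of_mem_dominatedSet (hui ▸ hi)
    · have hxu : IsLongBranch G c i x u := ⟨hxy.toIsBranch, hu, hui⟩
      exact notMem_support_of_forall_adj fun w hw => hxu.eq_of_adj_tip H hg hw ▸ hx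

lemma settles_tip (hxy : IsLongBranch G c i x y) (H : IsDominatingGirthCycle G g c)
    (hg : 9 ≤ g) (hx : x ∈ dominatedSet G A) : Settles G A y := by
  intro u hu
  rw [hxy.closedNbhd_tip H hg] at hu
  rcases hu with rfl | rfl
  · exact notMem_support_of_forall_adj fun w hw => hxy.eq_of_adj_tip H hg hw ▸ hx
  · exact notMem_support_of_mem_dominatedSet hx

lemma mem_edgeSet_residualGraph (hxy : IsLongBranch G c i x y) (H : IsGirthCycle G g c)
    (hg : 7 ≤ g) (hij : i < j ∧ j + 1 < i + g) :
    s(x, y) ∈ (residualGraph G {cycleEdge c j}).edgeSet :=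
  mem_edgeSet_residualGraph_singleton.2 ⟨hxy.adj_tip,
    ⟨hxy.notMem_closedNbhd H (by omega) (by omega), hxy.notMem_closedNbhd H (by omega) (by omega)⟩,
    hxy.tip_notMem_closedNbhd H hg j, hxy.tip_notMem_closedNbhd H hg (j + 1)⟩

lemma mem_edgeSet_residualGraph_of_isLongBranch (hxy : IsLongBranch G c i x y)
    (hxy' : IsLongBranch G c j x' y') (H : IsDominatingGirthCycle G g c) (hg : 9 ≤ g)
    (hij : i < j ∧ j < i + g) : s(x, y) ∈ (residualGraph G {s(x', y')}).edgeSet := by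
  have hxx' : x ∉ closedNbhd G x' :=
    hxy.notMem_closedNbhd_branch hxy'.toIsBranch H.toIsGirthCycle (by omega) hij
  have hxy'_ne : x ≠ y' := by
    rintro rfl
    exact hxy'.tip_notMem_closedNbhd H.toIsGirthCycle (by omega) i (Or.inr hxy.adj)
  have hx'y_ne : x' ≠ y := by
    rintro rfl
    exact hxy.tip_notMem_closedNbhd H.toIsGirthCycle (by omega) j (Or.inr hxy'.adj)
  have hne : x ≠ x' := fun h => hxx' (Or.inl h)
  have hyy' : y ≠ y' := by
    rintro rfl
    exact hne (hxy'.eq_of_adj_tip H hg hxy.adj_tip.symm)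
  refine mem_edgeSet_residualGraph_singleton.2 ⟨hxy.adj_tip, ⟨hxx', ?_⟩, ?_, ?_⟩
  · simp [hxy'.closedNbhd_tip H hg, hxy'_ne, hne]
  · rw [mem_closedNbhd_comm, hxy.closedNbhd_tip H hg]
    simp [hx'y_ne, hne.symm]
  · simp [hxy'.closedNbhd_tip H hg, hyy', hx'y_ne.symm]

end IsLongBranch

lemma IsBranch.mem_edgeSet_residualGraph (hx : IsBranch G c i x) (H : IsGirthCycle G g c)
    (hg : 5 ≤ g) (hij : i + 2 ≤ j ∧ j + 3 ≤ i + g) :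
    s(c i, x) ∈ (residualGraph G {cycleEdge c j}).edgeSet :=
  mem_edgeSet_residualGraph_singleton.2 ⟨hx.adj,
    ⟨H.notMem_closedNbhd (by omega), H.notMem_closedNbhd (by omega)⟩,
    hx.notMem_closedNbhd H hg (by omega), hx.notMem_closedNbhd H hg (by omega)⟩

lemma IsBranch.mem_edgeSet_residualGraph_of_isBranch (hx : IsBranch G c i x)
    (hx' : IsBranch G c j x') (H : IsGirthCycle G g c) (hg : 7 ≤ g)
    (hij : i + 2 ≤ j ∧ j + 2 ≤ i + g) : s(c i, x) ∈ (residualGraph G {s(c j, x')}).edgeSet := by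
  have hx'i : x' ∉ closedNbhd G (c i) := hx'.notMem_closedNbhd H (by omega) (by omega)
  exact mem_edgeSet_residualGraph_singleton.2 ⟨hx.adj,
    ⟨H.notMem_closedNbhd (by omega), mt mem_closedNbhd_comm.1 hx'i⟩,
    hx.notMem_closedNbhd H (by omega) (by omega),
    hx.notMem_closedNbhd_branch hx' H hg (by omega)⟩

namespace IsGirthCycle

lemma eq_or_isBranch_of_adj (H : IsGirthCycle G g c) (hu : G.Adj (c i) u) :
    u = c (i + 1) ∨ u = c (i - 1) ∨ IsBranch G c i u := by
  by_cases h : u ∈ Set.range c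
  · obtain ⟨k, rfl⟩ := h
    exact (H.eq_succ_or_eq_pred hu).imp_right Or.inl
  · exact Or.inr (Or.inr ⟨h, hu⟩)

lemma mem_dominatedSet (H : IsGirthCycle G g c) (hi : cycleEdge c i ∈ A) (hij : i ≤ j + 1)
    (hji : j ≤ i + 2) : c j ∈ dominatedSet G A := by
  rcases le_or_gt j (i + 1) with h | h
  · exact _root_.mem_dominatedSet hi (Sym2.mem_mk_left _ _) (H.mem_closedNbhd h hij)
  · exact _root_.mem_dominatedSet hi (Sym2.mem_mk_right _ _)
      (H.mem_closedNbhd (by omega) (by omega))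

lemma settles_of_forall_not_isLongBranch (H : IsGirthCycle G g c)
    (hlong : ∀ x y, ¬ IsLongBranch G c i x y) (hi : c i ∈ dominatedSet G A)
    (hsucc : c (i + 1) ∉ (residualGraph G A).support)
    (hpred : c (i - 1) ∉ (residualGraph G A).support) : Settles G A (c i) := by
  rintro u (rfl | hu)
  · exact notMem_support_of_mem_dominatedSet hi
  · obtain rfl | rfl | hu := H.eq_or_isBranch_of_adj hu
    · exact hsucc
    · exact hpred
    · refine notMem_support_of_forall_adj fun w hw => ?_
      have hwi : w = c i := by_contra fun hne => hlong u w ⟨hu, hw, hne⟩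
      exact hwi ▸ hi

lemma settles_of_forall_not_isBranch (H : IsGirthCycle G g c) (hbranch : ∀ x, ¬ IsBranch G c i x)
    (hsucc : c (i + 1) ∈ dominatedSet G A) (hpred : c (i - 1) ∈ dominatedSet G A) :
    Settles G A (c i) := by
  have hdom : ∀ u, G.Adj (c i) u → u ∈ dominatedSet G A := by
    intro u hu
    obtain rfl | rfl | hu := H.eq_or_isBranch_of_adj hu
    exacts [hsucc, hpred, (hbranch u hu).elim]
  rintro u (rfl | hu)
  exacts [notMem_support_of_forall_adj hdom, notMem_support_of_mem_dominatedSet (hdom u hu)]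

end IsGirthCycle

lemma IsBranch.settles (hx : IsBranch G c i x) (hlong : ∀ y, ¬ IsLongBranch G c i x y)
    (hi : c i ∈ dominatedSet G A) : Settles G A x := by
  have hnbr : ∀ u, G.Adj x u → u = c i :=
    fun u hu => by_contra fun hne => hlong u ⟨hx, hu, hne⟩
  rintro u (rfl | hu)
  · exact notMem_support_of_forall_adj fun w hw => hnbr w hw ▸ hi
  · exact notMem_support_of_mem_dominatedSet (hnbr u hu ▸ hi)

end Branches

namespace IsDominatingGirthCycle

variable {V : Type*} [Finite V] {G : SimpleGraph V} {g : ℕ} {c : ℤ → V}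

lemma not_isLongBranch_succ (H : IsDominatingGirthCycle G g c) (hg : 9 ≤ g)
    (hG : WellIndumatched G) {i : ℤ} {x y : V} (hxy : IsLongBranch G c i x y) (x' y' : V) :
    ¬ IsLongBranch G c (i + 1) x' y' := by
  intro hxy'
  refine not_wellIndumatched_of_exchange (I := ∅) (e := cycleEdge c i) (f₁ := s(x, y))
    (f₂ := s(x', y')) isInducedMatching_empty ?_ ?_ ?_ ?_ ?_ hG
  · rw [residualGraph_empty]
    exact H.cycleEdge_mem_edgeSet i
  · rw [residualGraph_empty]
    exact hxy'.adj_tip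
  · rw [insert_empty_eq]
    exact hxy.mem_edgeSet_residualGraph_of_isLongBranch hxy' H hg (by omega)
  all_goals rw [insert_empty_eq, Sym2.ball]
  · have hx : x ∈ dominatedSet G {cycleEdge c i} :=
      mem_dominatedSet rfl (Sym2.mem_mk_left _ _) (Or.inr hxy.adj)
    exact ⟨hxy.settles_branch H hg (H.mem_dominatedSet rfl (by omega) (by omega)) hx,
      hxy.settles_tip H hg hx⟩
  · have hx' : x' ∈ dominatedSet G {cycleEdge c i} :=
      mem_dominatedSet rfl (Sym2.mem_mk_right _ _) (Or.inr hxy'.adj)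
    exact ⟨hxy'.settles_branch H hg (H.mem_dominatedSet rfl (by omega) (by omega)) hx',
      hxy'.settles_tip H hg hx'⟩

lemma exists_isLongBranch_add_two (H : IsDominatingGirthCycle G g c) (hg : 9 ≤ g)
    (hG : WellIndumatched G) {i : ℤ} {x y : V} (hxy : IsLongBranch G c i x y) :
    ∃ x' y', IsLongBranch G c (i + 2) x' y' := by
  by_contra! hlong
  have hi : cycleEdge c i ∈ insert (cycleEdge c i) {cycleEdge c (i + 4)} := Set.mem_insert _ _
  have hi4 : cycleEdge c (i + 4) ∈ insert (cycleEdge c i) {cycleEdge c (i + 4)} :=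
    Set.mem_insert_of_mem _ rfl
  refine not_wellIndumatched_of_exchange (I := {cycleEdge c (i + 4)}) (e := cycleEdge c i)
    (f₁ := s(x, y)) (f₂ := cycleEdge c (i + 1))
    (isInducedMatching_singleton (H.cycleEdge_mem_edgeSet _))
    (H.cycleEdge_mem_edgeSet_residualGraph (by omega))
    (H.cycleEdge_mem_edgeSet_residualGraph (by omega)) ?_ ?_ ?_ hG
  · exact mem_edgeSet_residualGraph_insert.2
      ⟨hxy.mem_edgeSet_residualGraph H.toIsGirthCycle (by omega) (by omega),
        hxy.mem_edgeSet_residualGraph H.toIsGirthCycle (by omega) (by omega)⟩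
  · have hx : x ∈ dominatedSet G (insert (cycleEdge c i) {cycleEdge c (i + 4)}) :=
      mem_dominatedSet hi (Sym2.mem_mk_left _ _) (Or.inr hxy.adj)
    exact Sym2.ball.2 ⟨hxy.settles_branch H hg (H.mem_dominatedSet hi (by omega) (by omega)) hx,
      hxy.settles_tip H hg hx⟩
  · refine Sym2.ball.2 ⟨settles_of_mem hi (Sym2.mem_mk_right _ _), ?_⟩
    rw [show i + 1 + 1 = i + 2 by ring]
    exact H.settles_of_forall_not_isLongBranch hlong
      (H.mem_dominatedSet hi (by omega) (by omega))
      (notMem_support_of_mem_dominatedSet (H.mem_dominatedSet hi4 (by omega) (by omega)))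
      (notMem_support_of_mem_dominatedSet (H.mem_dominatedSet hi (by omega) (by omega)))

lemma exists_isLongBranch_add_two_mul (H : IsDominatingGirthCycle G g c) (hg : 9 ≤ g)
    (hG : WellIndumatched G) {i : ℤ} (hi : ∃ x y, IsLongBranch G c i x y) (n : ℕ) :
    ∃ x y, IsLongBranch G c (i + 2 * n) x y := by
  induction n with
  | zero => simpa using hi
  | succ n ih =>
    obtain ⟨x, y, hxy⟩ := ih
    rw [Nat.cast_succ, mul_add_one, ← add_assoc]
    exact H.exists_isLongBranch_add_two hg hG hxy

/-- As `g` is odd, steps of two from `c i` reach `c (i + 1)`. -/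
theorem not_isLongBranch (H : IsDominatingGirthCycle G g c) (hodd : Odd g) (hg : 9 ≤ g)
    (hG : WellIndumatched G) (i : ℤ) (x y : V) : ¬ IsLongBranch G c i x y := by
  intro hxy
  obtain ⟨k, hk⟩ := hodd
  obtain ⟨x', y', hxy'⟩ := H.exists_isLongBranch_add_two_mul hg hG ⟨x, y, hxy⟩ (k + 1)
  have hsucc : c (i + 2 * (k + 1 : ℕ)) = c (i + 1) := by
    rw [show i + 2 * ((k + 1 : ℕ) : ℤ) = i + 1 + g by push_cast [hk]; ring]
    exact H.eq_iff.2 (Int.add_modEq_right ..)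
  exact H.not_isLongBranch_succ hg hG hxy x' y'
    ⟨⟨hxy'.notMem_range, hsucc ▸ hxy'.adj⟩, hxy'.adj_tip, hsucc ▸ hxy'.tip_ne⟩

end IsDominatingGirthCycle

namespace IsGirthCycle

variable {V : Type*} [Finite V] {G : SimpleGraph V} {g : ℕ} {c : ℤ → V}

lemma not_isBranch_add_two (H : IsGirthCycle G g c) (hg : 7 ≤ g) (hG : WellIndumatched G)
    (hlong : ∀ i x y, ¬ IsLongBranch G c i x y) {i : ℤ} {x : V} (hx : IsBranch G c i x) (x' : V) :
    ¬ IsBranch G c (i + 2) x' := by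
  intro hx'
  have hi : cycleEdge c i ∈ insert (cycleEdge c i) {cycleEdge c (i + 4)} := Set.mem_insert _ _
  have hi4 : cycleEdge c (i + 4) ∈ insert (cycleEdge c i) {cycleEdge c (i + 4)} :=
    Set.mem_insert_of_mem _ rfl
  have hdom : c (i + 2) ∈ dominatedSet G (insert (cycleEdge c i) {cycleEdge c (i + 4)}) :=
    H.mem_dominatedSet hi (by omega) (by omega)
  refine not_wellIndumatched_of_exchange (I := {cycleEdge c (i + 4)}) (e := cycleEdge c i)
    (f₁ := s(c i, x)) (f₂ := s(c (i + 2), x'))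
    (isInducedMatching_singleton (H.cycleEdge_mem_edgeSet _))
    (H.cycleEdge_mem_edgeSet_residualGraph (by omega))
    (hx'.mem_edgeSet_residualGraph H (by omega) (by omega)) ?_ ?_ ?_ hG
  · exact mem_edgeSet_residualGraph_insert.2
      ⟨hx.mem_edgeSet_residualGraph_of_isBranch hx' H hg (by omega),
        hx.mem_edgeSet_residualGraph H (by omega) (by omega)⟩
  · exact Sym2.ball.2 ⟨settles_of_mem hi (Sym2.mem_mk_left _ _),
      hx.settles (hlong i x) (H.mem_dominatedSet hi (by omega) (by omega))⟩
  · refine Sym2.ball.2 ⟨H.settles_of_forall_not_isLongBranch (hlong _) hdom ?_ ?_,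
      hx'.settles (hlong _ x') hdom⟩
    · exact notMem_support_of_mem_dominatedSet (H.mem_dominatedSet hi4 (by omega) (by omega))
    · exact notMem_support_of_mem_dominatedSet (H.mem_dominatedSet hi (by omega) (by omega))

theorem exists_isBranch (H : IsGirthCycle G g c) (hg : g = 9 ∨ 12 ≤ g) (hG : WellIndumatched G)
    (hlong : ∀ i x y, ¬ IsLongBranch G c i x y) (i : ℤ) : ∃ x, IsBranch G c i x := by
  by_contra! hbranch
  set I : Set (Sym2 V) := {cycleEdge c (i - 3), cycleEdge c (i - 3 + 9)} with hI
  have hmem : ∀ {j}, i ≤ j → j ≤ i + 3 → cycleEdge c j ∈ (residualGraph G I).edgeSet :=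
    fun h h' => mem_edgeSet_residualGraph_insert.2
      ⟨H.cycleEdge_mem_edgeSet_residualGraph (by omega),
        H.cycleEdge_mem_edgeSet_residualGraph (by omega)⟩
  have hdom : ∀ {j}, i - 4 ≤ j ∧ j ≤ i - 1 ∨ i + 1 ≤ j ∧ j ≤ i + 4 ∨ i + 5 ≤ j ∧ j ≤ i + 8 →
      c j ∈ dominatedSet G (insert (cycleEdge c (i + 2)) I) := by
    rintro j (hj | hj | hj)
    · exact H.mem_dominatedSet (i := i - 3) (by simp [hI]) (by omega) (by omega)
    · exact H.mem_dominatedSet (i := i + 2) (by simp [hI]) (by omega) (by omega)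
    · exact H.mem_dominatedSet (i := i - 3 + 9) (by simp [hI]) (by omega) (by omega)
  have hsettles : Settles G (insert (cycleEdge c (i + 2)) I) (c i) :=
    H.settles_of_forall_not_isBranch hbranch (hdom (by omega)) (hdom (by omega))
  refine not_wellIndumatched_of_exchange (I := I) (e := cycleEdge c (i + 2)) (f₁ := cycleEdge c i)
    (f₂ := cycleEdge c (i + 3)) (H.isInducedMatching_pair hg _) (hmem (by omega) (by omega))
    (hmem (by omega) le_rfl) ?_ ?_ ?_ hG
  · exact mem_edgeSet_residualGraph_insert.2
      ⟨H.cycleEdge_mem_edgeSet_residualGraph (by omega), hmem le_rfl (by omega)⟩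
  · refine Sym2.ball.2 ⟨hsettles, H.settles_of_forall_not_isLongBranch (hlong _) (hdom (by omega))
      (notMem_support_of_mem_dominatedSet (hdom (by omega))) ?_⟩
    rw [add_sub_cancel_right]
    exact hsettles _ (self_mem_closedNbhd _)
  · refine Sym2.ball.2 ⟨settles_of_mem (Set.mem_insert _ _) ?_,
      H.settles_of_forall_not_isLongBranch (hlong _) (hdom (by omega))
        (notMem_support_of_mem_dominatedSet (hdom (by omega)))
        (notMem_support_of_mem_dominatedSet (hdom (by omega)))⟩
    rw [cycleEdge, show i + 2 + 1 = i + 3 by ring]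
    exact Sym2.mem_mk_right _ _

end IsGirthCycle

theorem IsDominatingGirthCycle.not_wellIndumatched {V : Type*} [Finite V] {G : SimpleGraph V}
    {g : ℕ} {c : ℤ → V} (H : IsDominatingGirthCycle G g c) (hodd : Odd g) (hg : 9 ≤ g)
    (hne : g ≠ 11) : ¬ WellIndumatched G := by
  intro hG
  have hlong := H.not_isLongBranch hodd hg hG
  have hg' : g = 9 ∨ 12 ≤ g := by grind
  obtain ⟨x₀, hx₀⟩ := H.exists_isBranch hg' hG hlong 0
  obtain ⟨x₂, hx₂⟩ := H.exists_isBranch hg' hG hlong (0 + 2)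
  exact H.not_isBranch_add_two (by omega) hG hlong hx₀ x₂ hx₂

/-- For every odd integer `g ≥ 9` with `g ≠ 11`, there is no well-indumatched graph of
girth `g`. -/
theorem stmt_17 (g : ℕ) (hodd : Odd g) (hg : 9 ≤ g) (hne : g ≠ 11)
    {V : Type*} [Fintype V] (G : SimpleGraph V) (hgirth : G.girth = g) :
    ¬ WellIndumatched G := by
  intro hG
  have hcyclic : ¬ G.IsAcyclic := by
    rw [← girth_eq_zero]
    omega
  obtain ⟨c, hc⟩ := exists_isGirthCycle hcyclic
  rw [hgirth] at hc
  obtain ⟨K, hK, hdom⟩ := hc.exists_isDominatingGirthCycle_residualGraph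
  exact hdom.not_wellIndumatched hodd hg hne (hG.residualGraph hK)
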